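/- Let φ : X → ℝ be continuous on X = 𝒜^(ℤ^d). Then the pressure function has the slant asymptote β ↦ s_φ β + h_φ at +∞: lim_{β→+∞} ( p_φ(β) − (s_φ β + h_φ) ) = 0. -/

import Mathlib

open MeasureTheory Filter Topology
open scoped ENNReal Classical

namespace Freezing

/-- The configuration space `X = 𝒜^(ℤ^d)`. -/
abbrev Cfg (d : ℕ) (A : Type) : Type := (Fin d → ℤ) → A

section Defs

variable {d : ℕ} {A : Type} [Fintype A] [TopologicalSpace A] [DiscreteTopology A]
  [MeasurableSpace A] [BorelSpace A]

/-- The shift action: `(σ^n x)_m = x_{n+m}`. -/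
def shift (n : Fin d → ℤ) (x : Cfg d A) : Cfg d A := fun m => x (n + m)

/-- Shift-invariance of a measure. -/
def Invariant (μ : Measure (Cfg d A)) : Prop :=
  ∀ n : Fin d → ℤ, Measure.map (shift n) μ = μ

/-- Cylinder set `[w]` for a pattern `w` on `E_n = ([0,n-1] ∩ ℤ)^d`. -/
def cylE (n : ℕ) (w : (Fin d → Fin n) → A) : Set (Cfg d A) :=
  { x | ∀ m : Fin d → Fin n, x (fun i => ((m i : ℕ) : ℤ)) = w m }

/-- Measure-theoretic entropy `h(μ) = inf_{n ≥ 1} n^{-d} Σ_w (-μ[w] log μ[w])`. -/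
noncomputable def entropy (μ : Measure (Cfg d A)) : ℝ :=
  ⨅ n : {n : ℕ // 1 ≤ n},
    ((n.1 : ℝ) ^ d)⁻¹ *
      ∑ w : (Fin d → Fin n.1) → A, Real.negMulLog (μ (cylE n.1 w)).toReal

/-- Pressure `p_φ(β) = sup { h(μ) + β ∫ φ dμ }` over shift-invariant probability measures. -/
noncomputable def pressure (φ : Cfg d A → ℝ) (β : ℝ) : ℝ :=
  sSup { r | ∃ μ : Measure (Cfg d A), IsProbabilityMeasure μ ∧ Invariant μ ∧
    r = entropy μ + β * ∫ x, φ x ∂μ }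

/-- The set of equilibrium states of `βφ`. -/
def ES (φ : Cfg d A → ℝ) (β : ℝ) : Set (Measure (Cfg d A)) :=
  { μ | IsProbabilityMeasure μ ∧ Invariant μ ∧
      entropy μ + β * ∫ x, φ x ∂μ = pressure φ β }

/-- `φ` has a freezing phase transition at `βc`. -/
def FreezingPT (φ : Cfg d A → ℝ) (βc : ℝ) : Prop :=
  (∀ β β' : ℝ, βc < β → βc < β' → ES φ β = ES φ β') ∧
  (∀ β β' : ℝ, β < βc → βc < β' → ES φ β ≠ ES φ β')

/-- `s_φ = sup { ∫ φ dμ }` over shift-invariant probability measures. -/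
noncomputable def sPhi (φ : Cfg d A → ℝ) : ℝ :=
  sSup { r | ∃ μ : Measure (Cfg d A), IsProbabilityMeasure μ ∧ Invariant μ ∧
    r = ∫ x, φ x ∂μ }

/-- The set of maximizing measures of `φ`. -/
def MM (φ : Cfg d A → ℝ) : Set (Measure (Cfg d A)) :=
  { μ | IsProbabilityMeasure μ ∧ Invariant μ ∧ (∫ x, φ x ∂μ) = sPhi φ }

/-- `h_φ = sup { h(η) : η ∈ MM(φ) }`. -/
noncomputable def hPhi (φ : Cfg d A → ℝ) : ℝ :=
  sSup { r | ∃ μ ∈ MM φ, r = entropy μ }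

/-- The zero-temperature accumulation points of `φ`. -/
def ZTA (φ : Cfg d A → ℝ) : Set (Measure (Cfg d A)) :=
  { μ | IsProbabilityMeasure μ ∧ Invariant μ ∧
      ∃ (β : ℕ → ℝ) (μs : ℕ → Measure (Cfg d A)),
        Tendsto β atTop atTop ∧ (∀ k, μs k ∈ ES φ (β k)) ∧
        ∀ f : Cfg d A → ℝ, Continuous f →
          Tendsto (fun k => ∫ x, f x ∂(μs k)) atTop (𝓝 (∫ x, f x ∂μ)) }

/-- A subshift: nonempty, closed, invariant under every shift. -/
def IsSubshift (X₀ : Set (Cfg d A)) : Prop :=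
  X₀.Nonempty ∧ IsClosed X₀ ∧ ∀ n : Fin d → ℤ, ∀ x ∈ X₀, shift n x ∈ X₀

/-- The language `L_{E_n}(X₀)`: patterns on `E_n` appearing at the origin of points of `X₀`. -/
def langE (X₀ : Set (Cfg d A)) (n : ℕ) : Set ((Fin d → Fin n) → A) :=
  { w | ∃ x ∈ X₀, ∀ m : Fin d → Fin n, x (fun i => ((m i : ℕ) : ℤ)) = w m }

/-- Topological entropy `h_top(X₀) = inf_{n ≥ 1} n^{-d} log |L_{E_n}(X₀)|`. -/
noncomputable def topEnt (X₀ : Set (Cfg d A)) : ℝ :=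
  ⨅ n : {n : ℕ // 1 ≤ n}, ((n.1 : ℝ) ^ d)⁻¹ * Real.log ((langE X₀ n.1).ncard)

/-- A measure of maximal entropy on the subshift `X₀`. -/
def IsMME (X₀ : Set (Cfg d A)) (μ : Measure (Cfg d A)) : Prop :=
  IsProbabilityMeasure μ ∧ Invariant μ ∧ μ X₀ = 1 ∧ entropy μ = topEnt X₀

/-- Ergodicity: invariant Borel sets have measure `0` or `1`. -/
def ErgodicInv (μ : Measure (Cfg d A)) : Prop :=
  ∀ s : Set (Cfg d A), MeasurableSet s → (∀ n : Fin d → ℤ, shift n ⁻¹' s = s) →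
    μ s = 0 ∨ μ s = 1

/-- The `n`-th variation `var_n φ`, over pairs agreeing on `B_n = ([-n,n] ∩ ℤ)^d`. -/
noncomputable def varPot (φ : Cfg d A → ℝ) (n : ℕ) : ℝ :=
  sSup { r | ∃ x y : Cfg d A,
    (∀ m : Fin d → ℤ, (∀ i, |m i| ≤ (n : ℤ)) → x m = y m) ∧ r = |φ x - φ y| }

/-- Sup-norm `‖m‖_∞` of a site `m ∈ ℤ^d`. -/
def supNorm (m : Fin d → ℤ) : ℕ := Finset.univ.sup fun i => (m i).natAbs

/-- The metric `dist(x,y) = 2^{-min{‖n‖_∞ : x_n ≠ y_n}}`. -/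
noncomputable def cfgDist (x y : Cfg d A) : ℝ :=
  if x = y then 0
  else (2 : ℝ) ^
    (-((sInf { k : ℕ | ∃ m : Fin d → ℤ, supNorm m = k ∧ x m ≠ y m } : ℕ) : ℤ))

/-- Distance from a point to a subshift. -/
noncomputable def distToSub (X₀ : Set (Cfg d A)) (x : Cfg d A) : ℝ :=
  sInf { r | ∃ y ∈ X₀, r = cfgDist x y }

end Defs


/-!
Write `s = s_φ` and `J μ = ∫ φ dμ`. On the weakly compact space of invariant probability measures,
`J` is continuous, and `h` is upper semicontinuous because it is an infimum of block entropies,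
which depend continuously on the measure as cylinders are clopen. As `β → ∞`, the upper
semicontinuous functions `h + β (J - s)` decrease pointwise to `h` where `J = s` and to `-∞`
elsewhere. By Dini's argument their suprema `p_φ(β) - s β` then decrease to the supremum `h_φ` of
`h` over `{J = s}`.
-/

section ZeroTemperatureLimit

lemma upperSemicontinuous_add_const_mul {X : Type*} [TopologicalSpace X] {h J : X → ℝ} {β : ℝ}
    (hβ : 0 ≤ β) (hh : UpperSemicontinuous h) (hJ : UpperSemicontinuous J) :
    UpperSemicontinuous fun x => h x + β * J x :=
  hh.add <| (continuous_const_mul β).comp_upperSemicontinuous hJ (monotone_mul_left_of_nonneg hβ)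

variable {K : Type*} [TopologicalSpace K] [CompactSpace K]

lemma exists_forall_lt_of_antitone_of_upperSemicontinuous {ι α : Type*} [Preorder ι]
    [IsDirectedOrder ι] [Nonempty ι] [Preorder α] {F : ι → K → α} {c : α}
    (hF : ∀ i, UpperSemicontinuous (F i)) (hanti : Antitone F) (hc : ∀ x, ∃ i, F i x < c) :
    ∃ i, ∀ x, F i x < c := by
  have hmono : Monotone fun i => F i ⁻¹' Set.Iio c :=
    fun i j hij x hx => (hanti hij x).trans_lt hx
  obtain ⟨i, hi⟩ := isCompact_univ.elim_directed_cover (fun i => F i ⁻¹' Set.Iio c)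
    (fun i => (hF i).isOpen_preimage c) (fun x _ => Set.mem_iUnion.2 (hc x)) hmono.directed_le
  exact ⟨i, fun x => hi (Set.mem_univ x)⟩

lemma bddAbove_range_of_upperSemicontinuous {α : Type*} [LinearOrder α] [Nonempty α] {f : K → α}
    (hf : UpperSemicontinuous f) : BddAbove (Set.range f) := by
  rw [← Set.image_univ]
  exact (hf.upperSemicontinuousOn Set.univ).bddAbove_of_isCompact isCompact_univ

/-- The points at which `J` attains its supremum; on a space of invariant measures, with
`J μ = ∫ φ dμ`, these are the maximizing measures of `φ`. -/
def maximizers {X : Type*} (J : X → ℝ) : Set X := {x | J x = ⨆ y, J y}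

lemma maximizers_nonempty [Nonempty K] {J : K → ℝ} (hJ : UpperSemicontinuous J) :
    (maximizers J).Nonempty := by
  obtain ⟨x, -, hx⟩ :=
    (hJ.upperSemicontinuousOn Set.univ).exists_isMaxOn Set.univ_nonempty isCompact_univ
  exact ⟨x, le_antisymm (le_ciSup (bddAbove_range_of_upperSemicontinuous hJ) x)
    (ciSup_le fun y => hx (Set.mem_univ y))⟩

variable {h J : K → ℝ}

lemma exists_nat_forall_add_mul_lt {c : ℝ} (hh : UpperSemicontinuous h)
    (hJ : UpperSemicontinuous J) (hJ0 : ∀ x, J x ≤ 0) (hc : ∀ x, J x = 0 → h x < c) :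
    ∃ N : ℕ, ∀ x, h x + N * J x < c := by
  refine exists_forall_lt_of_antitone_of_upperSemicontinuous
    (fun N => upperSemicontinuous_add_const_mul N.cast_nonneg hh hJ) (fun M N hMN x => ?_)
    fun x => ?_
  · have hMN' : (M : ℝ) ≤ N := Nat.cast_le.2 hMN
    exact add_le_add_right (mul_le_mul_of_nonpos_right hMN' (hJ0 x)) _
  · rcases (hJ0 x).eq_or_lt with hx | hx
    · exact ⟨0, by simpa using hc x hx⟩
    · obtain ⟨N, hN⟩ := exists_nat_gt ((h x - c) / -J x)
      rw [div_lt_iff₀ (neg_pos.2 hx)] at hN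
      exact ⟨N, by linarith⟩

lemma mul_add_sSup_image_maximizers_le_iSup [Nonempty K] {β : ℝ} (hβ : 0 ≤ β)
    (hh : UpperSemicontinuous h) (hJ : UpperSemicontinuous J) :
    (⨆ x, J x) * β + sSup (h '' maximizers J) ≤ ⨆ x, (h x + β * J x) := by
  rw [← le_sub_iff_add_le']
  refine csSup_le ((maximizers_nonempty hJ).image h) ?_
  rintro _ ⟨x, hx, rfl⟩
  have hle : h x + β * J x ≤ ⨆ y, (h y + β * J y) :=
    le_ciSup (bddAbove_range_of_upperSemicontinuous
      (upperSemicontinuous_add_const_mul hβ hh hJ)) x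
  rw [show J x = ⨆ y, J y from hx] at hle
  linarith

lemma eventually_iSup_le_mul_add [Nonempty K] {c : ℝ} (hh : UpperSemicontinuous h)
    (hJ : UpperSemicontinuous J) (hc : sSup (h '' maximizers J) < c) :
    ∀ᶠ β in atTop, ⨆ x, (h x + β * J x) ≤ (⨆ x, J x) * β + c := by
  have hJs : ∀ x, J x ≤ ⨆ y, J y := le_ciSup (bddAbove_range_of_upperSemicontinuous hJ)
  have hbdd : BddAbove (h '' maximizers J) :=
    (bddAbove_range_of_upperSemicontinuous hh).mono (Set.image_subset_range _ _)
  have hJsub : UpperSemicontinuous fun x => J x - ⨆ y, J y := by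
    simpa only [sub_eq_add_neg] using hJ.add upperSemicontinuous_const
  obtain ⟨N, hN⟩ := exists_nat_forall_add_mul_lt hh hJsub
    (fun x => sub_nonpos.2 (hJs x)) fun x hx =>
      (le_csSup hbdd (Set.mem_image_of_mem h (sub_eq_zero.1 hx))).trans_lt hc
  filter_upwards [eventually_ge_atTop (N : ℝ)] with β hβ
  refine ciSup_le fun x => ?_
  have hslope : β * (J x - ⨆ y, J y) ≤ N * (J x - ⨆ y, J y) :=
    mul_le_mul_of_nonpos_right hβ (sub_nonpos.2 (hJs x))
  linarith [hN x]

theorem tendsto_iSup_add_mul_sub_asymptote [Nonempty K] (hh : UpperSemicontinuous h)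
    (hJ : UpperSemicontinuous J) :
    Tendsto (fun β : ℝ =>
      (⨆ x, (h x + β * J x)) - ((⨆ x, J x) * β + sSup (h '' maximizers J))) atTop (𝓝 0) := by
  refine tendsto_order.2 ⟨fun a ha => ?_, fun a ha => ?_⟩
  · filter_upwards [eventually_ge_atTop 0] with β hβ
    linarith [mul_add_sSup_image_maximizers_le_iSup hβ hh hJ]
  · have hc : sSup (h '' maximizers J) < sSup (h '' maximizers J) + a / 2 :=
      lt_add_of_pos_right _ (half_pos ha)
    filter_upwards [eventually_iSup_le_mul_add hh hJ hc] with β hβ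
    linarith

end ZeroTemperatureLimit

/-- The shift-invariant probability measures on `Cfg d A`, as a subtype of `ProbabilityMeasure` so
that it carries the topology of weak convergence when `A` is a topological space. -/
abbrev InvariantMeasure (d : ℕ) (A : Type) [MeasurableSpace A] : Type :=
  {μ : ProbabilityMeasure (Cfg d A) // Invariant (μ : Measure (Cfg d A))}

section InvariantMeasures

lemma isClosed_setOf_map_eq_self {Ω : Type*} [TopologicalSpace Ω] [MeasurableSpace Ω]
    [BorelSpace Ω] [HasOuterApproxClosed Ω] {f : Ω → Ω} (hf : Continuous f) :
    IsClosed {μ : ProbabilityMeasure Ω | Measure.map f (μ : Measure Ω) = μ} := by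
  simpa only [← ProbabilityMeasure.toMeasure_injective.eq_iff, ProbabilityMeasure.toMeasure_map]
    using isClosed_eq (ProbabilityMeasure.continuous_map hf) continuous_id'

variable {d : ℕ} {A : Type} [TopologicalSpace A]

lemma continuous_shift (n : Fin d → ℤ) : Continuous (shift (A := A) n) :=
  continuous_pi fun _ => continuous_apply _

variable [MeasurableSpace A]

lemma isClosed_setOf_invariant [BorelSpace (Cfg d A)] [HasOuterApproxClosed (Cfg d A)] :
    IsClosed {μ : ProbabilityMeasure (Cfg d A) | Invariant (μ : Measure (Cfg d A))} := by
  simp only [Invariant, Set.ofPred_forall]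
  exact isClosed_iInter fun n => isClosed_setOf_map_eq_self (continuous_shift n)

instance [CompactSpace A] [T2Space A] [BorelSpace (Cfg d A)] [HasOuterApproxClosed (Cfg d A)] :
    CompactSpace (InvariantMeasure d A) :=
  isCompact_iff_compactSpace.1 isClosed_setOf_invariant.isCompact

lemma continuous_integral_invariantMeasure [CompactSpace A] [OpensMeasurableSpace (Cfg d A)]
    {φ : Cfg d A → ℝ} (hφ : Continuous φ) :
    Continuous fun μ : InvariantMeasure d A => ∫ x, φ x ∂(μ : Measure (Cfg d A)) :=
  (ProbabilityMeasure.continuous_integral_continuousMap (⟨φ, hφ⟩ : C(Cfg d A, ℝ))).comp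
    continuous_subtype_val

end InvariantMeasures

section Entropy

lemma continuous_toReal_measure_of_isClopen {Ω : Type*} [MeasurableSpace Ω] [TopologicalSpace Ω]
    [OpensMeasurableSpace Ω] [HasOuterApproxClosed Ω] {s : Set Ω} (hs : IsClopen s) :
    Continuous fun μ : ProbabilityMeasure Ω => ((μ : Measure Ω) s).toReal :=
  NNReal.continuous_coe.comp <| continuous_iff_continuousAt.2 fun _ =>
    ProbabilityMeasure.tendsto_measure_of_isClopen_of_tendsto tendsto_id hs

variable {d : ℕ} {A : Type}

lemma isClopen_cylE [TopologicalSpace A] [DiscreteTopology A] (n : ℕ) (w : (Fin d → Fin n) → A) :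
    IsClopen (cylE n w) := by
  simp only [cylE, Set.ofPred_forall]
  exact isClopen_iInter_of_finite fun m =>
    (isClopen_discrete {w m}).preimage (continuous_apply _)

/-- The entropy per site of `μ` on the box `E_n`, whose infimum over `n ≥ 1` is `entropy μ`. -/
noncomputable def blockEntropy [Fintype A] [MeasurableSpace A] (n : ℕ)
    (μ : Measure (Cfg d A)) : ℝ :=
  ((n : ℝ) ^ d)⁻¹ * ∑ w : (Fin d → Fin n) → A, Real.negMulLog (μ (cylE n w)).toReal

lemma blockEntropy_nonneg [Fintype A] [MeasurableSpace A] (n : ℕ) (μ : Measure (Cfg d A))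
    [IsProbabilityMeasure μ] : 0 ≤ blockEntropy n μ :=
  mul_nonneg (by positivity) <| Finset.sum_nonneg fun _ _ =>
    Real.negMulLog_nonneg ENNReal.toReal_nonneg measureReal_le_one

variable [Fintype A] [TopologicalSpace A] [DiscreteTopology A] [MeasurableSpace A] [BorelSpace A]

lemma continuous_blockEntropy (n : ℕ) :
    Continuous fun μ : ProbabilityMeasure (Cfg d A) => blockEntropy n (μ : Measure (Cfg d A)) :=
  continuous_const.mul <| continuous_finsetSum _ fun w _ =>
    Real.continuous_negMulLog.comp (continuous_toReal_measure_of_isClopen (isClopen_cylE n w))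

lemma upperSemicontinuous_entropy :
    UpperSemicontinuous fun μ : ProbabilityMeasure (Cfg d A) =>
      entropy (μ : Measure (Cfg d A)) := by
  have hbdd (μ : ProbabilityMeasure (Cfg d A)) : BddBelow
      (Set.range fun n : {n : ℕ // 1 ≤ n} => blockEntropy n.1 (μ : Measure (Cfg d A))) :=
    ⟨0, Set.forall_mem_range.2 fun n => blockEntropy_nonneg n.1 _⟩
  exact upperSemicontinuous_ciInf hbdd fun n => (continuous_blockEntropy n.1).upperSemicontinuous

end Entropy

section VariationalQuantities

variable {d : ℕ} {A : Type} [MeasurableSpace A]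

lemma sSup_invariant_eq_iSup (f : Measure (Cfg d A) → ℝ) :
    sSup {r | ∃ μ : Measure (Cfg d A), IsProbabilityMeasure μ ∧ Invariant μ ∧ r = f μ} =
      ⨆ μ : InvariantMeasure d A, f (μ : Measure (Cfg d A)) := by
  congr 1
  ext r
  constructor
  · rintro ⟨μ, hμ, hinv, rfl⟩
    exact ⟨⟨⟨μ, hμ⟩, hinv⟩, rfl⟩
  · rintro ⟨μ, rfl⟩
    exact ⟨μ, inferInstance, μ.2, rfl⟩

lemma sPhi_eq_iSup (φ : Cfg d A → ℝ) :
    sPhi φ = ⨆ μ : InvariantMeasure d A, ∫ x, φ x ∂(μ : Measure (Cfg d A)) :=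
  sSup_invariant_eq_iSup fun μ => ∫ x, φ x ∂μ

variable [Fintype A]

lemma pressure_eq_iSup (φ : Cfg d A → ℝ) (β : ℝ) :
    pressure φ β = ⨆ μ : InvariantMeasure d A,
      (entropy (μ : Measure (Cfg d A)) + β * ∫ x, φ x ∂(μ : Measure (Cfg d A))) :=
  sSup_invariant_eq_iSup fun μ => entropy μ + β * ∫ x, φ x ∂μ

lemma hPhi_eq_sSup_image_maximizers (φ : Cfg d A → ℝ) :
    hPhi φ = sSup ((fun μ : InvariantMeasure d A => entropy (μ : Measure (Cfg d A))) ''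
      maximizers fun μ : InvariantMeasure d A => ∫ x, φ x ∂(μ : Measure (Cfg d A))) := by
  unfold hPhi MM maximizers
  rw [sPhi_eq_iSup]
  congr 1
  ext r
  constructor
  · rintro ⟨μ, ⟨hμ, hinv, hmax⟩, rfl⟩
    exact ⟨⟨⟨μ, hμ⟩, hinv⟩, hmax, rfl⟩
  · rintro ⟨μ, hmax, rfl⟩
    exact ⟨μ, ⟨inferInstance, μ.2, hmax⟩, rfl⟩

end VariationalQuantities

/-- **Theorem 6.3 (ii).** The pressure function has the slant asymptote
`β ↦ s_φ β + h_φ` at `+∞`. -/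
theorem statement15 (d : ℕ) (hd : 1 ≤ d) (A : Type) [Fintype A] [TopologicalSpace A]
    [DiscreteTopology A] [MeasurableSpace A] [BorelSpace A]
    (φ : Cfg d A → ℝ) (hφ : Continuous φ) :
    Tendsto (fun β : ℝ => pressure φ β - (sPhi φ * β + hPhi φ)) atTop (𝓝 0) := by
  simp only [pressure_eq_iSup, sPhi_eq_iSup, hPhi_eq_sSup_image_maximizers]
  -- For `A = ∅` there is no invariant measure, and every supremum is `0` by convention.
  cases isEmpty_or_nonempty (InvariantMeasure d A)
  · simp only [Real.iSup_of_isEmpty, Set.eq_empty_of_isEmpty, Set.image_empty, Real.sSup_empty,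
      zero_mul, add_zero, sub_zero, tendsto_const_nhds]
  · exact tendsto_iSup_add_mul_sub_asymptote
      (upperSemicontinuous_entropy.comp continuous_subtype_val)
      (continuous_integral_invariantMeasure hφ).upperSemicontinuous

end Freezing
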